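/- For every t > 0 and every L > 0 with 0 < t, the kernel K_L(t,s) = (1/(πL)) (1−g_L(t)²)/((1−g_L(t))² − 2g_L(t)s/L) · 1/√(1−(1+s/L)²) satisfies ∫_{−2L}^0 K_L(t,s) ds = 1, where g_L(t) = t/L + 1 − √((t/L+1)²−1). -/

import Mathlib

open Real intervalIntegral

/-- The boundary conformal factor `g_L(t) = t/L + 1 - √((t/L+1)² - 1)`. -/
noncomputable def gL (L t : ℝ) : ℝ := t / L + 1 - Real.sqrt ((t / L + 1) ^ 2 - 1)

/-- The finite-window prediction kernel `K_L(t,s)`. -/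
noncomputable def KL (L t s : ℝ) : ℝ :=
  (1 / (Real.pi * L)) * ((1 - gL L t ^ 2) / ((1 - gL L t) ^ 2 - 2 * gL L t * s / L)) *
    (1 / Real.sqrt (1 - (1 + s / L) ^ 2))

/-!
With `u = 1 + s / L`, the kernel becomes the Poisson kernel of the unit disc at the point `g_L(t)`,
seen as a function of the real part `u = cos θ` of the boundary point, times the arcsine density
`1 / (π √(1 - u²))`. That density is the law of `cos θ` for `θ` uniform, so the integral is the
circle average of the Poisson kernel, which is `1`.
-/

open Polynomial.Chebyshev (measureT integral_measureT integral_measureT_eq_integral_cos)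

theorem integral_neg_self_of_even {E : Type*} [NormedAddCommGroup E] [NormedSpace ℝ E]
    {f : ℝ → E} (hf : f.Even) (a : ℝ) :
    ∫ x in -a..a, f x = (2 : ℝ) • ∫ x in 0..a, f x := by
  by_cases hint : IntervalIntegrable f MeasureTheory.volume 0 a
  · have hint_neg : IntervalIntegrable f MeasureTheory.volume (-a) 0 := by
      simpa only [hf _, neg_zero] using ((IntervalIntegrable.iff_comp_neg (by simp)).1 hint).symm
    have hreflect : ∫ x in -a..0, f x = ∫ x in 0..a, f x := by
      simpa only [hf _, neg_zero] using (integral_comp_neg (a := 0) (b := a) f).symm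
    rw [← integral_add_adjacent_intervals hint_neg hint, hreflect, two_smul]
  · have hsub : Set.uIcc 0 a ⊆ Set.uIcc (-a) a :=
      Set.uIcc_subset_uIcc_right (by grind [Set.mem_uIcc])
    rw [integral_undef hint, integral_undef (mt (·.mono_set hsub) hint), smul_zero]

theorem circleAverage_comp_re (f : ℝ → ℝ) :
    circleAverage (fun z ↦ f z.re) 0 1 = π⁻¹ * ∫ u, f u ∂measureT := by
  have heven : (fun θ ↦ f (cos θ)).Even := fun θ ↦ congrArg f (cos_neg θ)
  have hperiodic : (fun θ ↦ f (cos θ)).Periodic (2 * π) := fun θ ↦ congrArg f (cos_add_two_pi θ)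
  have hshift : ∫ θ in 0..2 * π, f (cos θ) = ∫ θ in -π..π, f (cos θ) := by
    convert hperiodic.intervalIntegral_add_eq 0 (-π) using 2 <;> ring
  calc circleAverage (fun z ↦ f z.re) 0 1
      = (2 * π)⁻¹ * ∫ θ in 0..2 * π, f (cos θ) := by
        simp [circleAverage_def, circleMap_zero, Complex.exp_ofReal_mul_I_re]
    _ = (2 * π)⁻¹ * (2 * ∫ θ in 0..π, f (cos θ)) := by
        rw [hshift, integral_neg_self_of_even heven, smul_eq_mul]
    _ = π⁻¹ * ∫ u, f u ∂measureT := by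
        rw [integral_measureT_eq_integral_cos]
        field_simp

theorem circleAverage_poissonKernel {c w : ℂ} {R : ℝ} (hw : w ∈ Metric.ball c R) :
    circleAverage (poissonKernel c w) c R = 1 := by
  simpa only [← Pi.one_def, smul_eq_mul, mul_one] using
    (InnerProductSpace.harmonicContOnCl_const (c := (1 : ℝ))).circleAverage_poissonKernel_smul hw

/-- The Poisson kernel of the unit disc at the point `r` of the real axis, as a function of the
real part `u` of the boundary point. -/
noncomputable def axialPoissonKernel (r u : ℝ) : ℝ :=
  (1 - r ^ 2) / (1 - 2 * r * u + r ^ 2)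

theorem poissonKernel_zero_ofReal (r : ℝ) {z : ℂ} (hz : ‖z‖ = 1) :
    poissonKernel 0 r z = axialPoissonKernel r z.re := by
  have hdist : ‖z - r‖ ^ 2 = 1 - 2 * r * z.re + r ^ 2 := by
    rw [← Complex.normSq_eq_norm_sq, Complex.normSq_sub, Complex.normSq_eq_norm_sq, hz]
    simp only [Complex.normSq_ofReal, Complex.conj_ofReal, Complex.re_mul_ofReal]
    ring
  simp [poissonKernel_def, axialPoissonKernel, hz, hdist]

theorem integral_axialPoissonKernel {r : ℝ} (hr : |r| < 1) :
    ∫ u, axialPoissonKernel r u ∂measureT = π := by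
  have hball : (r : ℂ) ∈ Metric.ball 0 1 := by simpa using hr
  have haverage : circleAverage (fun z ↦ axialPoissonKernel r z.re) 0 1 = 1 := by
    rw [← circleAverage_congr_sphere (f₁ := poissonKernel 0 r), circleAverage_poissonKernel hball]
    exact fun z hz ↦ poissonKernel_zero_ofReal r (by simpa using hz)
  rw [circleAverage_comp_re, inv_mul_eq_one₀ pi_ne_zero] at haverage
  exact haverage.symm

theorem gL_mem_Ioo {L t : ℝ} (h : 0 < t / L) : gL L t ∈ Set.Ioo 0 1 := by
  have hsqrt_lt : √((t / L + 1) ^ 2 - 1) < t / L + 1 := by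
    rw [sqrt_lt' (by linarith)]
    linarith
  have hlt_sqrt : t / L < √((t / L + 1) ^ 2 - 1) := lt_sqrt_of_sq_lt (by linarith)
  constructor <;> unfold gL <;> linarith

theorem KL_eq_axialPoissonKernel (L t s : ℝ) :
    KL L t s =
      (π * L)⁻¹ * (axialPoissonKernel (gL L t) (1 + s / L) * √(1 - (1 + s / L) ^ 2)⁻¹) := by
  have hdenom : (1 - gL L t) ^ 2 - 2 * gL L t * s / L =
      1 - 2 * gL L t * (1 + s / L) + gL L t ^ 2 := by ring
  rw [KL, axialPoissonKernel, hdenom, one_div, one_div, sqrt_inv, mul_assoc]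

theorem integral_KL {L : ℝ} (hL : L ≠ 0) (t : ℝ) :
    ∫ s in (-(2 * L))..0, KL L t s = π⁻¹ * ∫ u, axialPoissonKernel (gL L t) u ∂measureT := by
  have hleft : 1 + -(2 * L) / L = -1 := by field_simp; norm_num
  have hright : 1 + 0 / L = 1 := by simp
  simp only [KL_eq_axialPoissonKernel, integral_const_mul]
  rw [integral_comp_add_div (fun u ↦ axialPoissonKernel (gL L t) u * √(1 - u ^ 2)⁻¹) hL,
    hleft, hright, ← integral_measureT, smul_eq_mul]
  field_simp

theorem KL_integrates_to_one (L t : ℝ) (hL : 0 < L) (ht : 0 < t) :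
    ∫ s in (-(2 * L))..0, KL L t s = 1 := by
  obtain ⟨hg_pos, hg_lt_one⟩ := gL_mem_Ioo (div_pos ht hL)
  have hg : |gL L t| < 1 := abs_lt.2 ⟨by linarith, hg_lt_one⟩
  rw [integral_KL hL.ne', integral_axialPoissonKernel hg, inv_mul_cancel₀ pi_ne_zero]
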